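/- Let n, m ≥ 1, let f ∈ ℝⁿ, let g be a real n×m matrix, let G be a symmetric positive-definite real m×m matrix, let k ∈ ℝᵐ, let p, w ∈ ℝⁿ, and let a ∈ ℝ. Set z = ⟨w, f + g k⟩ + a, and define u* = k if z ≥ 0, and u* = k − (z/(wᵀ g G⁻¹ gᵀ w)) G⁻¹ gᵀ w if z < 0 (assuming gᵀw ≠ 0 whenever z < 0). If ⟨p, f + g k⟩ ≤ 0 and either z ≥ 0 or pᵀ g G⁻¹ gᵀ w < 0, then ⟨p, f + g u*⟩ ≤ 0. -/

import Mathlib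

open Matrix

/-!
The quadratic form of `G⁻¹` at `x = G y` is that of `G` at `y`, so it is positive on nonzero
vectors. Hence if `z < 0`, the correction `u* - k` is a positive multiple of `G⁻¹ gᵀ w`, along which
the derivative of the Lyapunov function does not increase; if `z ≥ 0`, there is no correction.
-/

section PositiveForm

variable {κ K : Type*} [Fintype κ] [DecidableEq κ] [Field K] [Preorder K] {G : Matrix κ κ K}

theorem isUnit_det_of_dotProduct_mulVec_pos (hG : ∀ u : κ → K, u ≠ 0 → 0 < u ⬝ᵥ G *ᵥ u) :
    IsUnit G.det := by
  refine isUnit_iff_ne_zero.mpr fun hdet ↦ ?_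
  obtain ⟨u, hu, hGu⟩ := exists_mulVec_eq_zero_iff.mpr hdet
  exact (hG u hu).ne' (by rw [hGu, dotProduct_zero])

theorem dotProduct_inv_mulVec_pos (hG : ∀ u : κ → K, u ≠ 0 → 0 < u ⬝ᵥ G *ᵥ u)
    {x : κ → K} (hx : x ≠ 0) : 0 < x ⬝ᵥ G⁻¹ *ᵥ x := by
  have hGx : G *ᵥ (G⁻¹ *ᵥ x) = x := by
    rw [mulVec_mulVec, mul_nonsing_inv G (isUnit_det_of_dotProduct_mulVec_pos hG), one_mulVec]
  have hne : G⁻¹ *ᵥ x ≠ 0 := fun h ↦ hx (by rw [← hGx, h, mulVec_zero])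
  calc 0 < (G⁻¹ *ᵥ x) ⬝ᵥ G *ᵥ (G⁻¹ *ᵥ x) := hG _ hne
    _ = x ⬝ᵥ G⁻¹ *ᵥ x := by rw [hGx, dotProduct_comm]

end PositiveForm

theorem dotProduct_add_mulVec_sub_smul {ι κ R : Type*} [Fintype ι] [Fintype κ] [CommRing R]
    (p f : ι → R) (g : Matrix ι κ R) (k v : κ → R) (c : R) :
    p ⬝ᵥ (f + g *ᵥ (k - c • v)) = p ⬝ᵥ (f + g *ᵥ k) - c * p ⬝ᵥ (g *ᵥ v) := by
  rw [mulVec_sub, mulVec_smul, ← add_sub_assoc, dotProduct_sub, dotProduct_smul, smul_eq_mul]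

section SafeController

variable {ι κ K : Type*} [Fintype ι] [Fintype κ] [DecidableEq κ] [Field K] [LinearOrder K]

/-- The closed-form controller (7): the nominal input `k`, corrected along `G⁻¹ gᵀ w` when the
barrier condition fails. The value `z = ⟨w, f + g k⟩ + a` of the barrier condition at `k` is passed
as an argument. For `z < 0` the formula is meaningful only if `wᵀ g G⁻¹ gᵀ w ≠ 0`. -/
noncomputable def safeController (g : Matrix ι κ K) (G : Matrix κ κ K) (k : κ → K) (w : ι → K)
    (z : K) : κ → K :=
  if 0 ≤ z then k
  else k - (z / ((gᵀ *ᵥ w) ⬝ᵥ G⁻¹ *ᵥ (gᵀ *ᵥ w))) • (G⁻¹ *ᵥ (gᵀ *ᵥ w))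

theorem stmt_6_general [IsStrictOrderedRing K] (f : ι → K) (g : Matrix ι κ K) {G : Matrix κ κ K}
    (hG : ∀ u : κ → K, u ≠ 0 → 0 < u ⬝ᵥ G *ᵥ u) (k : κ → K) (p w : ι → K) (z : K)
    (hw : z < 0 → gᵀ *ᵥ w ≠ 0)
    (hp : 0 ≤ z ∨ p ⬝ᵥ (g *ᵥ (G⁻¹ *ᵥ (gᵀ *ᵥ w))) ≤ 0) :
    p ⬝ᵥ (f + g *ᵥ safeController g G k w z) ≤ p ⬝ᵥ (f + g *ᵥ k) := by
  rcases le_or_gt 0 z with hz | hz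
  · rw [safeController, if_pos hz]
  · have hstep : z / ((gᵀ *ᵥ w) ⬝ᵥ G⁻¹ *ᵥ (gᵀ *ᵥ w)) ≤ 0 :=
      div_nonpos_of_nonpos_of_nonneg hz.le (dotProduct_inv_mulVec_pos hG (hw hz)).le
    rw [safeController, if_neg hz.not_ge, dotProduct_add_mulVec_sub_smul]
    exact sub_le_self _ (mul_nonneg_of_nonpos_of_nonpos hstep (hp.resolve_left hz.not_ge))

end SafeController

/-- pointwise case analysis showing the Lyapunov function is
nonincreasing under the closed-form QP controller (7). -/
theorem stmt_6 (n m : ℕ) (hn : 1 ≤ n) (hm : 1 ≤ m)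
    (f : Fin n → ℝ) (g : Matrix (Fin n) (Fin m) ℝ)
    (G : Matrix (Fin m) (Fin m) ℝ)
    (hGsymm : Gᵀ = G)
    (hGpos : ∀ u : Fin m → ℝ, u ≠ 0 → 0 < u ⬝ᵥ G *ᵥ u)
    (k : Fin m → ℝ) (p w : Fin n → ℝ) (a : ℝ) :
    let z := w ⬝ᵥ (f + g *ᵥ k) + a
    let d := (gᵀ *ᵥ w) ⬝ᵥ G⁻¹ *ᵥ (gᵀ *ᵥ w)
    let ustar := if 0 ≤ z then k else k - (z / d) • (G⁻¹ *ᵥ (gᵀ *ᵥ w))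
    (z < 0 → gᵀ *ᵥ w ≠ 0) →
    p ⬝ᵥ (f + g *ᵥ k) ≤ 0 →
    (0 ≤ z ∨ p ⬝ᵥ (g *ᵥ (G⁻¹ *ᵥ (gᵀ *ᵥ w))) < 0) →
    p ⬝ᵥ (f + g *ᵥ ustar) ≤ 0 := by
  intro z _ _ hw hp hdir
  exact (stmt_6_general f g hGpos k p w z hw (hdir.imp_right le_of_lt)).trans hp
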